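/- Let p be an odd prime and q ≥ 12 an integer with p − q < (1/5)·q, and let d be an integer with q ≤ d ≤ p. Let R be a (p+1)-regular finite simple graph with an even number of vertices and λ(R) ≤ 2√p. Then R contains p − d pairwise edge-disjoint perfect matchings, and the graph H obtained from R by deleting the edges of these p − d perfect matchings is (d+1)-regular and satisfies λ(H) ≤ 2√d + (2/5)·d and girth(H) ≥ girth(R). -/

import Mathlib

open Classical

set_option linter.unusedSectionVars false

noncomputable section

namespace Formal

variable {V : Type*} [Fintype V] [DecidableEq V]

/-- The real adjacency matrix of a finite simple graph. -/
def adjMat (G : SimpleGraph V) : Matrix V V ℝ :=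
  letI := Classical.decRel G.Adj
  SimpleGraph.adjMatrix ℝ G

lemma adjMat_isHermitian (G : SimpleGraph V) : (adjMat G).IsHermitian := by
  letI := Classical.decRel G.Adj
  unfold adjMat
  rw [Matrix.IsHermitian, Matrix.conjTranspose_eq_transpose_of_trivial]
  exact SimpleGraph.isSymm_adjMatrix G

/-- `G` is `k`-regular: every vertex has exactly `k` neighbours. -/
def IsRegular (G : SimpleGraph V) (k : ℕ) : Prop :=
  ∀ v : V, (G.neighborSet v).ncard = k

/-- The eigenvalues (with multiplicity) of the adjacency matrix, indexed by vertices. -/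
def eigs (G : SimpleGraph V) : V → ℝ :=
  (adjMat_isHermitian G).eigenvalues

/-- The absolute values of the adjacency eigenvalues, sorted in increasing order. -/
def sortedAbsEigs (G : SimpleGraph V) : List ℝ :=
  (Finset.univ.val.map fun i => |eigs G i|).sort (· ≤ ·)

/-- `λ(G)`: the second largest absolute value of an eigenvalue (with multiplicity). -/
def secondLargestAbsEig (G : SimpleGraph V) : ℝ :=
  (sortedAbsEigs G).getD (Fintype.card V - 2) 0

/-- `λ₃(G)`: the third largest absolute value of an eigenvalue (with multiplicity). -/
def thirdLargestAbsEig (G : SimpleGraph V) : ℝ :=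
  (sortedAbsEigs G).getD (Fintype.card V - 3) 0

/-- `μ` has a `(k, ε)`-localized (ℓ²-normalized) eigenvector for `A(G)`. -/
def HasLocalizedEigenvector (G : SimpleGraph V) (μ : ℝ) (k : ℕ) (ε : ℝ) : Prop :=
  ∃ v : V → ℝ, (adjMat G).mulVec v = μ • v ∧ (∑ x, (v x) ^ 2) = 1 ∧
    ∃ S : Finset V, S.card = k ∧ ε ≤ ∑ x ∈ S, (v x) ^ 2

/-- There are `r` distinct eigenvalues of `A(G)`, each with a `(k, ε)`-localized
eigenvector for some `k ≤ bound`. -/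
def LocalizedSpectrum (G : SimpleGraph V) (r : ℕ) (ε bound : ℝ) : Prop :=
  ∃ Λ : Finset ℝ, Λ.card = r ∧
    ∀ μ ∈ Λ, ∃ k : ℕ, (k : ℝ) ≤ bound ∧ HasLocalizedEigenvector G μ k ε

/-- `girth(G) ≥ x` for a real number `x` (`girth = ⊤` counts as `≥ x`). -/
def girthGe {W : Type*} (G : SimpleGraph W) (x : ℝ) : Prop :=
  ∀ g : ℕ, G.girth = g → x ≤ g

/-- `girth(G) > x` for a real number `x` (`girth = ⊤` counts as `> x`). -/
def girthGt {W : Type*} (G : SimpleGraph W) (x : ℝ) : Prop :=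
  ∀ g : ℕ, G.girth = g → x < g

/-- The `j`-th prime, so `nthPrime 1 = 2`, `nthPrime 2 = 3`, ..., `nthPrime 10 = 29`. -/
def nthPrime (j : ℕ) : ℕ :=
  Nat.nth Nat.Prime (j - 1)

/-- The adjacency matrix has norm at most `c` on the vectors whose coordinates sum to zero. -/
def NormBoundedOnSumZero (G : SimpleGraph V) (c : ℝ) : Prop :=
  ∀ v : EuclideanSpace ℝ V, ∑ x, v x = 0 → ‖Matrix.toEuclideanLin (adjMat G) v‖ ≤ c * ‖v‖

lemma adjMat_apply (G : SimpleGraph V) (x y : V) :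
    adjMat G x y = if G.Adj x y then 1 else 0 := by
  simp [adjMat, SimpleGraph.adjMatrix_apply]

lemma adjMat_comm (G : SimpleGraph V) (x y : V) : adjMat G x y = adjMat G y x := by
  simp [adjMat_apply, G.adj_comm]

lemma adjMat_nonneg (G : SimpleGraph V) (x y : V) : 0 ≤ adjMat G x y := by
  rw [adjMat_apply]; split_ifs <;> norm_num

lemma adjMat_le_one (G : SimpleGraph V) (x y : V) : adjMat G x y ≤ 1 := by
  rw [adjMat_apply]; split_ifs <;> norm_num

lemma IsRegular.sum_adjMat {G : SimpleGraph V} {k : ℕ} (h : IsRegular G k) (x : V) :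
    ∑ y, adjMat G x y = k := by
  simp only [adjMat_apply, Finset.sum_boole]
  rw [← h x, Set.ncard_eq_toFinset_card']
  congr 2
  ext y
  simp

lemma toEuclideanLin_adjMat_apply (G : SimpleGraph V) (v : EuclideanSpace ℝ V) (x : V) :
    (Matrix.toEuclideanLin (adjMat G) v) x = ∑ y, adjMat G x y * v y := by
  simp [Matrix.toLpLin_apply, Matrix.mulVec, dotProduct]

/-- In a sorted list the second to last entry is at most `c` iff at most one entry exceeds `c`. -/
lemma getD_length_sub_two_le_iff {l : List ℝ} (hl : l.Pairwise (· ≤ ·)) (h2 : 2 ≤ l.length)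
    (c : ℝ) : l.getD (l.length - 2) 0 ≤ c ↔ l.countP (fun x => decide (c < x)) ≤ 1 := by
  have hlt : l.length - 2 < l.length := by omega
  rw [List.getD_eq_getElem _ _ hlt]
  have hmono : ∀ i j (hi : i < l.length) (hj : j < l.length), i ≤ j → l[i] ≤ l[j] := by
    intro i j hi hj hij
    rcases hij.eq_or_lt with rfl | hij
    · exact le_rfl
    · exact List.pairwise_iff_getElem.1 hl i j hi hj hij
  constructor
  · intro h
    rw [← List.take_append_drop (l.length - 1) l, List.countP_append]
    have h1 : (l.take (l.length - 1)).countP (fun x => decide (c < x)) = 0 := by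
      rw [List.countP_eq_zero]
      intro a ha
      obtain ⟨i, hi, rfl⟩ := List.getElem_of_mem ha
      simp only [List.length_take] at hi
      simp only [List.getElem_take, decide_eq_true_eq, not_lt]
      exact (hmono i (l.length - 2) (by omega) hlt (by omega)).trans h
    have h3 := List.countP_le_length (p := fun x => decide (c < x)) (l := l.drop (l.length - 1))
    rw [List.length_drop] at h3
    omega
  · intro h
    by_contra! hc
    have h1 : (l.drop (l.length - 2)).countP (fun x => decide (c < x))
        = (l.drop (l.length - 2)).length := by
      rw [List.countP_eq_length]
      intro a ha
      obtain ⟨i, hi, rfl⟩ := List.getElem_of_mem ha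
      simp only [List.length_drop] at hi
      simp only [List.getElem_drop, decide_eq_true_eq]
      exact hc.trans_le (hmono _ _ hlt (by omega) (by omega))
    have h3 := (List.drop_sublist (l.length - 2) l).countP_le (p := fun x => decide (c < x))
    rw [h1, List.length_drop] at h3
    omega

lemma secondLargestAbsEig_le_iff (G : SimpleGraph V) (hV : 2 ≤ Fintype.card V) (c : ℝ) :
    secondLargestAbsEig G ≤ c ↔ ∀ i j, c < |eigs G i| → c < |eigs G j| → i = j := by
  have hlen : (sortedAbsEigs G).length = Fintype.card V := by
    simp [sortedAbsEigs]
  have hcount : (sortedAbsEigs G).countP (fun x => decide (c < x))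
      = (Finset.univ.filter fun i => c < |eigs G i|).card := by
    rw [← Multiset.coe_countP, sortedAbsEigs, Multiset.sort_eq, Multiset.countP_map]
    rfl
  unfold secondLargestAbsEig
  rw [← hlen, getD_length_sub_two_le_iff (l := sortedAbsEigs G) (Multiset.pairwise_sort _ _) (hlen ▸ hV), hcount,
    Finset.card_le_one]
  simp only [Finset.mem_filter, Finset.mem_univ, true_and]
  exact ⟨fun h i j hi hj => h i hi j hj, fun h i hi j hj => h i j hi hj⟩

lemma toEuclideanLin_eigenvectorBasis (G : SimpleGraph V) (i : V) :
    Matrix.toEuclideanLin (adjMat G) ((adjMat_isHermitian G).eigenvectorBasis i)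
      = eigs G i • (adjMat_isHermitian G).eigenvectorBasis i := by
  ext x
  have := congrFun ((adjMat_isHermitian G).mulVec_eigenvectorBasis i) x
  simpa [Matrix.toLpLin_apply, eigs] using this

lemma inner_eigenvectorBasis_toEuclideanLin (G : SimpleGraph V) (i : V)
    (v : EuclideanSpace ℝ V) :
    inner ℝ ((adjMat_isHermitian G).eigenvectorBasis i) (Matrix.toEuclideanLin (adjMat G) v)
      = eigs G i * inner ℝ ((adjMat_isHermitian G).eigenvectorBasis i) v := by
  rw [← Matrix.isSymmetric_toEuclideanLin_iff.mpr (adjMat_isHermitian G),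
    toEuclideanLin_eigenvectorBasis, real_inner_smul_left]

lemma norm_sq_toEuclideanLin_adjMat (G : SimpleGraph V) (v : EuclideanSpace ℝ V) :
    ‖Matrix.toEuclideanLin (adjMat G) v‖ ^ 2
      = ∑ i, eigs G i ^ 2 * inner ℝ ((adjMat_isHermitian G).eigenvectorBasis i) v ^ 2 := by
  rw [← (adjMat_isHermitian G).eigenvectorBasis.sum_sq_norm_inner_right]
  simp [inner_eigenvectorBasis_toEuclideanLin, mul_pow]

lemma sum_sq_inner_eigenvectorBasis (G : SimpleGraph V) (v : EuclideanSpace ℝ V) :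
    ∑ i, inner ℝ ((adjMat_isHermitian G).eigenvectorBasis i) v ^ 2 = ‖v‖ ^ 2 := by
  rw [← (adjMat_isHermitian G).eigenvectorBasis.sum_sq_norm_inner_right]
  simp

lemma inner_toLp_one (v : EuclideanSpace ℝ V) :
    inner ℝ v (WithLp.toLp 2 fun _ : V => (1 : ℝ)) = ∑ x, v x := by
  simp [PiLp.inner_apply]

lemma IsRegular.toEuclideanLin_one {G : SimpleGraph V} {k : ℕ} (h : IsRegular G k) :
    Matrix.toEuclideanLin (adjMat G) (WithLp.toLp 2 fun _ : V => (1 : ℝ))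
      = (k : ℝ) • WithLp.toLp 2 fun _ : V => (1 : ℝ) := by
  ext x
  rw [toEuclideanLin_adjMat_apply]
  simp [h.sum_adjMat]

/-- For a regular graph, the nontrivial spectrum controls the norm on sum-zero vectors. -/
lemma NormBoundedOnSumZero.of_secondLargestAbsEig_le {G : SimpleGraph V} {k : ℕ} {c : ℝ}
    (h : IsRegular G k) (hV : 2 ≤ Fintype.card V) (hc0 : 0 ≤ c) (hck : c < k)
    (hG : secondLargestAbsEig G ≤ c) : NormBoundedOnSumZero G c := by
  rw [secondLargestAbsEig_le_iff G hV] at hG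
  intro v hv
  set b := (adjMat_isHermitian G).eigenvectorBasis with hb
  set e : EuclideanSpace ℝ V := WithLp.toLp 2 fun _ : V => (1 : ℝ) with he
  have horth : ∀ i, |eigs G i| ≤ c → inner ℝ (b i) e = 0 := by
    intro i hi
    have h1 := inner_eigenvectorBasis_toEuclideanLin G i e
    rw [h.toEuclideanLin_one, real_inner_smul_right] at h1
    have h2 : ((k : ℝ) - eigs G i) * inner ℝ (b i) e = 0 := by linear_combination h1
    rcases mul_eq_zero.1 h2 with h3 | h3
    · linarith [le_abs_self (eigs G i)]
    · exact h3
  have hkey : ∀ i, eigs G i ^ 2 * inner ℝ (b i) v ^ 2 ≤ c ^ 2 * inner ℝ (b i) v ^ 2 := by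
    intro i
    by_cases hi : |eigs G i| ≤ c
    · exact mul_le_mul_of_nonneg_right (sq_le_sq' (by linarith [neg_abs_le (eigs G i)])
        ((le_abs_self _).trans hi)) (sq_nonneg _)
    · have hother : ∀ j, j ≠ i → inner ℝ (b j) e = 0 := fun j hj =>
        horth j (not_lt.1 fun hlt => hj (hG j i hlt (not_le.1 hi)))
      have hexp := b.sum_inner_mul_inner v e
      rw [inner_toLp_one, hv, Finset.sum_eq_single i
        (fun j _ hj => by rw [hother j hj, mul_zero]) (by simp)] at hexp
      have hee : inner ℝ (b i) e ≠ 0 := by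
        intro h0
        have hall : ∀ j, inner ℝ (b j) e = 0 := fun j => by
          by_cases hj : j = i
          · rw [hj, h0]
          · exact hother j hj
        have hn := b.sum_sq_norm_inner_right e
        simp only [hall, norm_zero] at hn
        have : e = 0 := by
          rw [← norm_eq_zero]; symm at hn; simpa using hn
        have := congrFun (congrArg WithLp.ofLp this) i
        simp [he] at this
      rw [real_inner_comm, (mul_eq_zero.1 hexp).resolve_right hee]
      simp
  have hsq : ‖Matrix.toEuclideanLin (adjMat G) v‖ ^ 2 ≤ (c * ‖v‖) ^ 2 := by
    rw [norm_sq_toEuclideanLin_adjMat, mul_pow, ← sum_sq_inner_eigenvectorBasis G v,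
      Finset.mul_sum]
    exact Finset.sum_le_sum fun i _ => hkey i
  exact le_of_sq_le_sq hsq (by positivity)

lemma NormBoundedOnSumZero.secondLargestAbsEig_le {G : SimpleGraph V} {c : ℝ}
    (hV : 2 ≤ Fintype.card V) (hc0 : 0 ≤ c) (hG : NormBoundedOnSumZero G c) :
    secondLargestAbsEig G ≤ c := by
  rw [secondLargestAbsEig_le_iff G hV]
  intro i j hi hj
  by_contra hij
  set b := (adjMat_isHermitian G).eigenvectorBasis with hb
  obtain ⟨s, t, hst, hsum⟩ : ∃ s t : ℝ, (s ≠ 0 ∨ t ≠ 0) ∧ ∑ x, (s • b i + t • b j) x = 0 := by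
    by_cases h0 : ∑ x, b i x = 0
    · exact ⟨1, 0, Or.inl one_ne_zero, by simpa using h0⟩
    · refine ⟨-∑ x, b j x, ∑ x, b i x, Or.inr h0, ?_⟩
      simp only [PiLp.add_apply, PiLp.smul_apply, smul_eq_mul, Finset.sum_add_distrib,
        ← Finset.mul_sum]
      ring
  have hnorm : ∀ s t : ℝ, ‖s • b i + t • b j‖ ^ 2 = s ^ 2 + t ^ 2 := by
    intro s t
    have h0 : inner ℝ (s • b i) (t • b j) = 0 := by
      rw [real_inner_smul_left, real_inner_smul_right, b.orthonormal.2 hij]; simp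
    rw [sq, norm_add_sq_eq_norm_sq_add_norm_sq_of_inner_eq_zero _ _ h0]
    simp [norm_smul, b.orthonormal.1]
    ring
  have hA : Matrix.toEuclideanLin (adjMat G) (s • b i + t • b j)
      = (s * eigs G i) • b i + (t * eigs G j) • b j := by
    rw [map_add, map_smul, map_smul, hb, toEuclideanLin_eigenvectorBasis,
      toEuclideanLin_eigenvectorBasis, smul_smul, smul_smul]
  have hle := pow_le_pow_left₀ (norm_nonneg _) (hG _ hsum) 2
  rw [mul_pow, hA, hnorm, hnorm] at hle
  have hi2 : c ^ 2 < eigs G i ^ 2 := by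
    rw [← sq_abs (eigs G i)]; exact pow_lt_pow_left₀ hi hc0 two_ne_zero
  have hj2 : c ^ 2 < eigs G j ^ 2 := by
    rw [← sq_abs (eigs G j)]; exact pow_lt_pow_left₀ hj hc0 two_ne_zero
  rcases hst with h | h
  · nlinarith [mul_pos (sub_pos.2 hi2) (pow_pos (abs_pos.2 h) 2), sq_abs s,
      mul_nonneg (sub_pos.2 hj2).le (sq_nonneg t)]
  · nlinarith [mul_pos (sub_pos.2 hj2) (pow_pos (abs_pos.2 h) 2), sq_abs t,
      mul_nonneg (sub_pos.2 hi2).le (sq_nonneg s)]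

/-- The number of edges leaving `C` is at least `(k - c) |C| (n - |C|) / n`. -/
lemma NormBoundedOnSumZero.le_boundary [Nonempty V] {G : SimpleGraph V} {k : ℕ} {c : ℝ}
    (h : IsRegular G k) (hG : NormBoundedOnSumZero G c) (C : Finset V) :
    (k - c) * C.card * (1 - C.card / Fintype.card V)
      ≤ ∑ x ∈ C, ∑ y ∈ Cᶜ, adjMat G x y := by
  set n : ℝ := (Fintype.card V : ℝ) with hn
  have hn0 : n ≠ 0 := by simp [hn]
  set a : ℝ := (C.card : ℝ) / n with ha
  set e : EuclideanSpace ℝ V := WithLp.toLp 2 fun _ : V => (1 : ℝ) with he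
  set f : EuclideanSpace ℝ V := WithLp.toLp 2 fun x : V => if x ∈ C then (1 : ℝ) else 0 with hf
  have hcard : ∑ x, f x = C.card := by simp [hf]
  have hfe : inner ℝ f e = (C.card : ℝ) := by rw [inner_toLp_one, hcard]
  have hee : inner ℝ e e = n := by rw [inner_toLp_one]; simp [he, hn]
  have hff : inner ℝ f f = (C.card : ℝ) := by
    rw [PiLp.inner_apply]
    simp [hf]
  have hsum : ∑ x, (f - a • e) x = 0 := by
    rw [← inner_toLp_one, inner_sub_left, real_inner_smul_left]
    change inner ℝ f e - a * inner ℝ e e = 0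
    rw [hfe, hee, ha]; field_simp; ring
  have hsq : ‖f - a • e‖ ^ 2 = C.card * (1 - a) := by
    rw [← real_inner_self_eq_norm_sq]
    simp only [inner_sub_left, inner_sub_right, real_inner_smul_left, real_inner_smul_right,
      real_inner_comm f e, hfe, hee, hff]
    rw [ha]; field_simp; ring
  have hquad : inner ℝ (f - a • e) (Matrix.toEuclideanLin (adjMat G) (f - a • e))
      = inner ℝ f (Matrix.toEuclideanLin (adjMat G) f) - k * C.card * a := by
    have hswap : inner ℝ e (Matrix.toEuclideanLin (adjMat G) f) = k * C.card := by
      rw [← Matrix.isSymmetric_toEuclideanLin_iff.mpr (adjMat_isHermitian G),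
        h.toEuclideanLin_one, real_inner_smul_left, real_inner_comm, hfe]
    simp only [map_sub, map_smul, inner_sub_left, inner_sub_right, real_inner_smul_left,
      real_inner_smul_right, hswap]
    rw [h.toEuclideanLin_one, real_inner_smul_right, real_inner_smul_right, hfe, hee, ha]
    field_simp; ring
  have hle : inner ℝ (f - a • e) (Matrix.toEuclideanLin (adjMat G) (f - a • e))
      ≤ c * (C.card * (1 - a)) := by
    rw [← hsq]
    refine (real_inner_le_norm _ _).trans ?_
    nlinarith [mul_le_mul_of_nonneg_left (hG _ hsum) (norm_nonneg (f - a • e))]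
  have hin : inner ℝ f (Matrix.toEuclideanLin (adjMat G) f)
      = ∑ x ∈ C, ∑ y ∈ C, adjMat G x y := by
    simp only [PiLp.inner_apply, toEuclideanLin_adjMat_apply]
    simp [hf]
  have htot : ∑ x ∈ C, ∑ y ∈ C, adjMat G x y + ∑ x ∈ C, ∑ y ∈ Cᶜ, adjMat G x y
      = k * C.card := by
    rw [← Finset.sum_add_distrib]
    simp only [Finset.sum_add_sum_compl, h.sum_adjMat]
    simp [mul_comm]
  rw [hquad, hin] at hle
  nlinarith

lemma IsRegular.le_boundary_of_card_le {G : SimpleGraph V} {k : ℕ} (h : IsRegular G k)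
    {C : Finset V} (hC : C.Nonempty) (hCk : C.card ≤ k) :
    (k : ℝ) ≤ ∑ x ∈ C, ∑ y ∈ Cᶜ, adjMat G x y := by
  have hx : ∀ x ∈ C, (k : ℝ) - (C.card - 1) ≤ ∑ y ∈ Cᶜ, adjMat G x y := by
    intro x hx
    have h1 : ∑ y ∈ C, adjMat G x y ≤ C.card - 1 := by
      rw [← Finset.add_sum_erase _ _ hx]
      have : adjMat G x x = 0 := by simp [adjMat_apply]
      rw [this, zero_add]
      refine (Finset.sum_le_card_nsmul _ _ 1 fun y _ => adjMat_le_one G x y).trans ?_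
      rw [Finset.card_erase_of_mem hx, nsmul_one, Nat.cast_sub hC.card_pos]
      simp
    have h2 := Finset.sum_add_sum_compl C (fun y => adjMat G x y)
    rw [h.sum_adjMat] at h2
    linarith
  have h3 := Finset.card_nsmul_le_sum _ _ _ hx
  rw [nsmul_eq_mul] at h3
  have h4 : (1 : ℝ) ≤ C.card := by exact_mod_cast hC.card_pos
  have h5 : (C.card : ℝ) ≤ k := by exact_mod_cast hCk
  nlinarith

/-- In an expanding regular graph on an even number of vertices, any family of disjoint odd sets
whose boundaries lie in `S` has at most `|S|` members. -/
lemma NormBoundedOnSumZero.card_le_of_boundary_subset {ι : Type*} [Fintype ι]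
    {G : SimpleGraph V} {k : ℕ} {c : ℝ} (h : IsRegular G k) (hG : NormBoundedOnSumZero G c)
    (hk : 0 < k) (hc : c + 2 ≤ k) (heven : Even (Fintype.card V)) (S : Finset V)
    (C : ι → Finset V) (hodd : ∀ i, Odd (C i).card) (hdisj : ∀ i j, i ≠ j → Disjoint (C i) (C j))
    (hS : ∀ i, ∀ x ∈ C i, ∀ y ∉ C i, G.Adj x y → y ∈ S) : Fintype.card ι ≤ S.card := by
  rcases isEmpty_or_nonempty ι with hι | hι
  · simp
  have hne : ∀ i, (C i).Nonempty := fun i => Finset.card_pos.1 (hodd i).pos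
  have hV : Nonempty V := ⟨(hne (Classical.arbitrary ι)).choose⟩
  set e : ι → ℝ := fun i => ∑ x ∈ C i, ∑ y ∈ (C i)ᶜ, adjMat G x y with he
  have hn : (0 : ℝ) < Fintype.card V := by exact_mod_cast Fintype.card_pos
  have hkR : (0 : ℝ) < k := by exact_mod_cast hk
  have hcR : ∀ i, (1 : ℝ) ≤ (C i).card := fun i => by exact_mod_cast (hodd i).pos
  have hpos : ∀ i, 0 < e i := by
    intro i
    refine lt_of_lt_of_le ?_ (hG.le_boundary h (C i))
    have hlt : (C i).card < Fintype.card V := by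
      refine lt_of_le_of_ne (Finset.card_le_univ _) fun heq => ?_
      exact (Nat.not_even_iff_odd.2 (hodd i)) (heq ▸ heven)
    have hlt' : ((C i).card : ℝ) / Fintype.card V < 1 := by
      rw [div_lt_one hn]; exact_mod_cast hlt
    exact mul_pos (mul_pos (by linarith) (by linarith [hcR i])) (by linarith)
  have hbig : ∀ i, 2 * (C i).card ≤ Fintype.card V → (k : ℝ) ≤ e i := by
    intro i hi
    by_cases hik : (C i).card ≤ k
    · exact h.le_boundary_of_card_le (hne i) hik
    · refine le_trans ?_ (hG.le_boundary h (C i))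
      have h1 : ((C i).card : ℝ) / Fintype.card V ≤ 1 / 2 := by
        rw [div_le_div_iff₀ hn two_pos]
        have : (2 : ℝ) * (C i).card ≤ Fintype.card V := by exact_mod_cast hi
        linarith
      have h2 : (k : ℝ) ≤ (C i).card := by exact_mod_cast (not_le.1 hik).le
      have h3 : 2 * ((C i).card : ℝ) ≤ (k - c) * (C i).card :=
        mul_le_mul_of_nonneg_right (by linarith) (by positivity)
      nlinarith
  have huniq : ∃ i₀, ∀ i, i ≠ i₀ → (k : ℝ) ≤ e i := by
    by_cases hex : ∃ i₀, Fintype.card V < 2 * (C i₀).card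
    · obtain ⟨i₀, hi₀⟩ := hex
      refine ⟨i₀, fun i hi => hbig i ?_⟩
      have h1 := Finset.card_union_of_disjoint (hdisj i i₀ hi)
      have h2 := Finset.card_le_univ (C i ∪ C i₀)
      omega
    · push Not at hex
      exact ⟨Classical.arbitrary ι, fun i _ => hbig i (hex i)⟩
  obtain ⟨i₀, hi₀⟩ := huniq
  have hlower : ((Fintype.card ι : ℝ) - 1) * k < ∑ i, e i := by
    rw [← Finset.add_sum_erase _ _ (Finset.mem_univ i₀)]
    have h1 := Finset.card_nsmul_le_sum (Finset.univ.erase i₀) e k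
      fun i hi => hi₀ i (Finset.ne_of_mem_erase hi)
    rw [Finset.card_erase_of_mem (Finset.mem_univ _), nsmul_eq_mul, Finset.card_univ,
      Nat.cast_sub Fintype.card_pos, Nat.cast_one] at h1
    linarith [hpos i₀]
  have hupper : ∑ i, e i ≤ S.card * k := by
    calc ∑ i, e i ≤ ∑ i, ∑ x ∈ C i, ∑ y ∈ S, adjMat G x y := by
          refine Finset.sum_le_sum fun i _ => Finset.sum_le_sum fun x hx => ?_
          rw [← Finset.sum_subset (Finset.inter_subset_left (s₂ := S))]
          · exact Finset.sum_le_sum_of_subset_of_nonneg Finset.inter_subset_right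
              fun y _ _ => adjMat_nonneg G x y
          · intro y hy hyS
            rw [adjMat_apply, if_neg]
            exact fun hadj => hyS (Finset.mem_inter.2
              ⟨hy, hS i x hx y (Finset.mem_compl.1 hy) hadj⟩)
      _ = ∑ x ∈ Finset.univ.biUnion C, ∑ y ∈ S, adjMat G x y :=
          (Finset.sum_biUnion fun i _ j _ hij => hdisj i j hij).symm
      _ ≤ ∑ x, ∑ y ∈ S, adjMat G x y :=
          Finset.sum_le_sum_of_subset_of_nonneg (Finset.subset_univ _)
            fun x _ _ => Finset.sum_nonneg fun y _ => adjMat_nonneg G x y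
      _ = ∑ y ∈ S, ∑ x, adjMat G y x := by
          refine Finset.sum_comm.trans ?_
          exact Finset.sum_congr rfl fun y _ => Finset.sum_congr rfl fun x _ => adjMat_comm G x y
      _ = S.card * k := by simp [h.sum_adjMat]
  have hlt : (Fintype.card ι : ℝ) - 1 < S.card :=
    lt_of_mul_lt_mul_right (hlower.trans_le hupper) hkR.le
  exact Nat.lt_succ_iff.1 (by exact_mod_cast sub_lt_iff_lt_add.1 hlt)

lemma NormBoundedOnSumZero.exists_isPerfectMatching {G : SimpleGraph V} {k : ℕ} {c : ℝ}
    (h : IsRegular G k) (hG : NormBoundedOnSumZero G c) (hk : 0 < k) (hc : c + 2 ≤ k)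
    (heven : Even (Fintype.card V)) : ∃ M : G.Subgraph, M.IsPerfectMatching := by
  rw [SimpleGraph.tutte]
  intro u
  rw [SimpleGraph.IsTutteViolator, not_lt]
  set H := ((⊤ : G.Subgraph).deleteVerts u).coe with hH
  let C : H.oddComponents → Finset V := fun K => (Subtype.val '' K.1.supp).toFinset
  have hmem : ∀ K x, x ∈ C K ↔ ∃ hx, H.connectedComponentMk ⟨x, hx⟩ = K.1 := by
    intro K x
    simp only [C, Set.mem_toFinset, Set.mem_image, SimpleGraph.ConnectedComponent.mem_supp_iff]
    constructor
    · rintro ⟨y, hy, rfl⟩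
      exact ⟨y.2, hy⟩
    · rintro ⟨hx, hy⟩
      exact ⟨⟨x, hx⟩, hy, rfl⟩
  have hle := hG.card_le_of_boundary_subset h hk hc heven u.toFinset C
    (fun K => by
      have h1 := K.2
      simp only [C]
      rw [← Set.ncard_eq_toFinset_card', Set.ncard_image_of_injective _ Subtype.val_injective]
      exact h1)
    (fun K L hKL => by
      rw [Finset.disjoint_left]
      intro x hx hx'
      obtain ⟨_, h1⟩ := (hmem K x).1 hx
      obtain ⟨_, h2⟩ := (hmem L x).1 hx'
      exact hKL (Subtype.ext (h1.symm.trans h2)))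
    (fun K x hx y hy hadj => by
      rw [Set.mem_toFinset]
      by_contra hyu
      obtain ⟨hxv, h1⟩ := (hmem K x).1 hx
      have hyv : y ∈ ((⊤ : G.Subgraph).deleteVerts u).verts := by simp [hyu]
      have hxu : x ∉ u := by simpa using hxv
      refine hy ((hmem K y).2 ⟨hyv, ?_⟩)
      rw [← h1]
      refine SimpleGraph.ConnectedComponent.sound (SimpleGraph.Adj.reachable ?_)
      simp [hH, hyu, hxu, hadj.symm])
  rwa [Set.ncard_eq_toFinset_card' u, ← Nat.card_coe_set_eq, Nat.card_eq_fintype_card]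

/-- A perfect matching is the graph of a permutation, and deleting it removes one neighbour of each
vertex. -/
lemma exists_equiv_deleteEdges {G : SimpleGraph V} {M : G.Subgraph} (hM : M.IsPerfectMatching) :
    ∃ f : V ≃ V, (∀ x, G.Adj x (f x)) ∧
      ∀ x y, (G.deleteEdges M.edgeSet).Adj x y ↔ G.Adj x y ∧ y ≠ f x := by
  rw [SimpleGraph.Subgraph.isPerfectMatching_iff] at hM
  choose f hf huniq using hM
  have hinv : Function.Involutive f := fun x => (huniq (f x) x (hf x).symm).symm
  refine ⟨hinv.toPerm f, fun x => (hf x).adj_sub, fun x y => ?_⟩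
  rw [SimpleGraph.deleteEdges_adj, SimpleGraph.Subgraph.mem_edgeSet]
  refine and_congr_right fun _ => not_congr ⟨fun hxy => huniq x y hxy, ?_⟩
  rintro rfl
  exact hf x

lemma IsRegular.deleteEdges {G : SimpleGraph V} {k : ℕ} (h : IsRegular G (k + 1))
    {M : G.Subgraph} (hM : M.IsPerfectMatching) : IsRegular (G.deleteEdges M.edgeSet) k := by
  obtain ⟨f, hf, hadj⟩ := exists_equiv_deleteEdges hM
  intro x
  have : (G.deleteEdges M.edgeSet).neighborSet x = G.neighborSet x \ {f x} := by
    ext y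
    simpa using hadj x y
  rw [this, Set.ncard_sdiff_singleton_of_mem (s := G.neighborSet x) (hf x), h x, Nat.add_sub_cancel]

lemma NormBoundedOnSumZero.deleteEdges {G : SimpleGraph V} {c : ℝ} (hG : NormBoundedOnSumZero G c)
    {M : G.Subgraph} (hM : M.IsPerfectMatching) :
    NormBoundedOnSumZero (G.deleteEdges M.edgeSet) (c + 1) := by
  obtain ⟨f, hf, hadj⟩ := exists_equiv_deleteEdges hM
  intro v hv
  set w : EuclideanSpace ℝ V := WithLp.toLp 2 fun x => v (f x) with hw
  have hwn : ‖w‖ = ‖v‖ := by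
    rw [EuclideanSpace.norm_eq, EuclideanSpace.norm_eq]
    congr 1
    exact Equiv.sum_comp f fun x => ‖v x‖ ^ 2
  have hsub : Matrix.toEuclideanLin (adjMat (G.deleteEdges M.edgeSet)) v
      = Matrix.toEuclideanLin (adjMat G) v - w := by
    ext x
    have hent : ∀ y, adjMat (G.deleteEdges M.edgeSet) x y
        = adjMat G x y - if y = f x then 1 else 0 := by
      intro y
      by_cases hy : y = f x
      · subst hy
        simp only [adjMat_apply, hadj]
        simp [hf x]
      · simp only [adjMat_apply, hadj]
        simp [hy]
    rw [PiLp.sub_apply, toEuclideanLin_adjMat_apply, toEuclideanLin_adjMat_apply]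
    simp [hent, sub_mul, hw]
  rw [hsub]
  refine (norm_sub_le _ _).trans ?_
  rw [hwn]
  linarith [hG v hv]

lemma IsRegular.not_isAcyclic [Nonempty V] {G : SimpleGraph V} {k : ℕ} (h : IsRegular G k)
    (hk : 2 ≤ k) : ¬ G.IsAcyclic := by
  intro hG
  obtain ⟨T, hGT, -, hT, hreach⟩ :=
    SimpleGraph.exists_isAcyclic_reachable_eq_le_of_le_of_isAcyclic (le_top (a := G)) hG
  have hdeg : ∀ v, 2 ≤ T.degree v := fun v => by
    rw [← SimpleGraph.card_neighborSet_eq_degree, ← Nat.card_eq_fintype_card,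
      Nat.card_coe_set_eq]
    exact (hk.trans (h v).ge).trans (Set.ncard_le_ncard fun y hy => hGT hy)
  have htree : T.IsTree := by
    refine ⟨⟨fun x y => ?_⟩, hT⟩
    rw [hreach]
    exact SimpleGraph.connected_top.preconnected x y
  have hnt : Nontrivial V := by
    obtain ⟨v⟩ := ‹Nonempty V›
    obtain ⟨w, hw⟩ := (T.degree_pos_iff_exists_adj (v := v)).1 (by linarith [hdeg v])
    exact ⟨v, w, hw.ne⟩
  obtain ⟨v, hv⟩ := htree.exists_vert_degree_one_of_nontrivial
  linarith [hdeg v]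

/-- Perfect matchings can be peeled off one at a time while the spectral gap remains. -/
lemma NormBoundedOnSumZero.exists_disjoint_perfectMatchings {G : SimpleGraph V} {k : ℕ} {c : ℝ}
    (h : IsRegular G k) (hG : NormBoundedOnSumZero G c) (heven : Even (Fintype.card V)) (m : ℕ)
    (hmk : m ≤ k) (hm : 0 < m → c + 2 * m ≤ k) :
    ∃ Ms : Fin m → G.Subgraph,
      (∀ i, (Ms i).IsPerfectMatching) ∧
      (∀ i j, i ≠ j → Disjoint (Ms i).edgeSet (Ms j).edgeSet) ∧
      IsRegular (G.deleteEdges (⋃ i, (Ms i).edgeSet)) (k - m) ∧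
      NormBoundedOnSumZero (G.deleteEdges (⋃ i, (Ms i).edgeSet)) (c + m) := by
  induction m with
  | zero => exact ⟨Fin.elim0, fun i => i.elim0, fun i => i.elim0, by simpa, by simpa⟩
  | succ m ih =>
    have hm' := hm m.succ_pos
    push_cast at hm'
    obtain ⟨Ms, hperf, hdisj, hreg, hbd⟩ := ih (by omega) fun _ => by linarith
    set U := ⋃ i, (Ms i).edgeSet with hU
    obtain ⟨M, hM⟩ := hbd.exists_isPerfectMatching hreg (by omega)
      (by rw [Nat.cast_sub (by omega)]; linarith) heven
    let N : G.Subgraph :=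
      { verts := M.verts
        Adj := M.Adj
        adj_sub := fun hxy => (G.deleteEdges_le U) (M.adj_sub hxy)
        edge_vert := M.edge_vert
        symm := M.symm }
    have hNM : N.edgeSet = M.edgeSet := by
      ext e
      induction e with
      | _ x y => rfl
    have hNperf : N.IsPerfectMatching := hM
    have hNdisj : ∀ i, Disjoint (Ms i).edgeSet N.edgeSet := by
      intro i
      rw [Set.disjoint_left, hNM]
      intro e he heM
      have := M.edgeSet_subset heM
      rw [SimpleGraph.edgeSet_deleteEdges] at this
      exact this.2 (Set.mem_iUnion.2 ⟨i, he⟩)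
    have hdel : G.deleteEdges (⋃ i, ((Fin.cons N Ms : Fin (m + 1) → G.Subgraph) i).edgeSet)
        = (G.deleteEdges U).deleteEdges M.edgeSet := by
      rw [SimpleGraph.deleteEdges_deleteEdges, ← hNM, hU, Set.union_comm]
      congr 1
      ext e
      simp [Fin.exists_fin_succ]
    refine ⟨Fin.cons N Ms, ?_, ?_, ?_, ?_⟩
    · exact Fin.cases hNperf hperf
    · refine Fin.cases (Fin.cases (fun hne => absurd rfl hne) fun j _ => (hNdisj j).symm)
        fun i => Fin.cases (fun _ => hNdisj i) fun j hij => ?_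
      exact hdisj i j fun heq => hij (heq ▸ rfl)
    · rw [hdel]
      refine IsRegular.deleteEdges ?_ hM
      rwa [show k - (m + 1) + 1 = k - m by omega]
    · rw [hdel]
      have := hbd.deleteEdges hM
      push_cast
      rwa [← add_assoc]

/-- deleting `p - d` edge-disjoint perfect matchings from an LPS-type
`(p+1)`-regular expander, for `d` between `q` and `p` with `p - q < q/5`. -/
theorem stmt_16 {V : Type*} [Fintype V] [DecidableEq V]
    (p q : ℕ) (hp : Nat.Prime p) (hpodd : Odd p) (hq : 12 ≤ q)
    (hgap : (p : ℝ) - q < (1 / 5) * q)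
    (d : ℕ) (hd₁ : q ≤ d) (hd₂ : d ≤ p)
    (R : SimpleGraph V) (hreg : IsRegular R (p + 1))
    (heven : Even (Fintype.card V))
    (hlam : secondLargestAbsEig R ≤ 2 * Real.sqrt p) :
    ∃ Ms : Fin (p - d) → R.Subgraph,
      (∀ i, (Ms i).IsPerfectMatching) ∧
      (∀ i j, i ≠ j → Disjoint (Ms i).edgeSet (Ms j).edgeSet) ∧
      IsRegular (R.deleteEdges (⋃ i, (Ms i).edgeSet)) (d + 1) ∧
      secondLargestAbsEig (R.deleteEdges (⋃ i, (Ms i).edgeSet)) ≤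
        2 * Real.sqrt d + (2 / 5) * d ∧
      R.girth ≤ (R.deleteEdges (⋃ i, (Ms i).edgeSet)).girth := by
  have hgap' : 5 * ((p : ℝ) - d) < d := by
    have : (q : ℝ) ≤ d := by exact_mod_cast hd₁
    linarith
  have hd12 : (12 : ℝ) ≤ d := by exact_mod_cast hq.trans hd₁
  have hpd : (d : ℝ) ≤ p := by exact_mod_cast hd₂
  have hsp : Real.sqrt p ^ 2 = p := Real.sq_sqrt (by positivity)
  have hsd : Real.sqrt d ^ 2 = d := Real.sq_sqrt (by positivity)
  have hsp3 : (3 : ℝ) ≤ Real.sqrt p := Real.le_sqrt_of_sq_le (by linarith)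
  have hsd3 : (3 : ℝ) ≤ Real.sqrt d := Real.le_sqrt_of_sq_le (by linarith)
  have hsdp : Real.sqrt d ≤ Real.sqrt p := Real.sqrt_le_sqrt hpd
  have hcast : ((p - d : ℕ) : ℝ) = p - d := Nat.cast_sub hd₂
  have hbound : NormBoundedOnSumZero R (2 * Real.sqrt p) ∧
      (Nonempty V → 2 ≤ Fintype.card V) := by
    rcases isEmpty_or_nonempty V with hV | hV
    · exact ⟨fun v _ => by simp [Subsingleton.elim v 0], fun ⟨x⟩ => hV.elim x⟩
    · have hcard : 2 ≤ Fintype.card V := by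
        obtain ⟨t, ht⟩ := heven
        have := Fintype.card_pos (α := V)
        omega
      refine ⟨.of_secondLargestAbsEig_le hreg hcard (by positivity) ?_ hlam, fun _ => hcard⟩
      push_cast
      nlinarith
  obtain ⟨hbd, hcard⟩ := hbound
  obtain ⟨Ms, hperf, hdisj, hregH, hbdH⟩ :=
    hbd.exists_disjoint_perfectMatchings hreg heven (p - d) (by omega) fun _ => by
      rw [hcast]; push_cast; nlinarith
  rw [show p + 1 - (p - d) = d + 1 by omega] at hregH
  refine ⟨Ms, hperf, hdisj, hregH, ?_, ?_⟩
  · rcases isEmpty_or_nonempty V with hV | hV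
    · have : secondLargestAbsEig (R.deleteEdges (⋃ i, (Ms i).edgeSet)) = 0 := by
        simp [secondLargestAbsEig, sortedAbsEigs]
      rw [this]
      positivity
    · refine (hbdH.secondLargestAbsEig_le (hcard hV) (by positivity)).trans ?_
      rw [hcast]
      nlinarith [mul_nonneg (sub_nonneg.2 hsdp) (sub_nonneg.2 hsd3)]
  · rcases isEmpty_or_nonempty V with hV | hV
    · rw [SimpleGraph.girth_eq_zero.2 fun x => hV.elim x]
      exact Nat.zero_le _
    · exact SimpleGraph.girth_anti (R.deleteEdges_le _) (hregH.not_isAcyclic (by omega))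

end Formal
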